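/- arXiv:2102.06275 — 3 statements merged into one kernel-verified Lean document; each statement's English description precedes it below -/
import Mathlib

section
/- Let F : 𝓛 ⥤ 𝓜 be a discrete opfibration between inverse categories and X : 𝓜 ⥤ Type a functor. Then for every object K of 𝓛 there is a bijection between the matching object M_K(F ⋙ X) of the composite diagram and the matching object M_{F K} X, and this bijection commutes with the matching maps out of (F ⋙ X)(K) = X(F K). -/
open CategoryTheory

universe w v u v₂ u₂ v₃ u₃

/-- An inverse category: a category equipped with a rank function such that every
morphism weakly decreases rank, and only identities preserve rank. -/
structure InverseRank (C : Type u) [Category.{v} C] where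
  rk : C → ℕ
  rk_le : ∀ {K L : C} (f : K ⟶ L), rk L ≤ rk K
  rk_id : ∀ {K L : C} (f : K ⟶ L), rk L = rk K → ∃ h : K = L, f = eqToHom h

/-- An inverse category has height `p` if every object has rank `< p`. -/
def InverseRank.HasHeight {C : Type u} [Category.{v} C] (r : InverseRank C) (p : ℕ) : Prop :=
  ∀ K : C, r.rk K < p

section

variable {C : Type u} [Category.{v} C]

/-- The objects of rank `m`. -/
abbrev RankObj (rk : C → ℕ) (m : ℕ) : Type u := {L : C // rk L = m}

/-- The fanout of `K` at `m`: pairs `(L, f)` with `L` of rank `m` and `f : K ⟶ L`. -/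
abbrev Fanout (rk : C → ℕ) (K : C) (m : ℕ) : Type max u v :=
  Σ L : RankObj rk m, (K ⟶ L.1)

/-- An object of the derivative `∂_M 𝓛`: a pair `(K, α)` with `K` of positive rank
(i.e. of rank `n + 1` for some `n`) and `α` a section of `M` over the fanout of `K`
at `0`. -/
structure DerivObj (rk : C → ℕ) (M : RankObj rk 0 → Type w) : Type max u v w where
  pt : C
  pos : 0 < rk pt
  sec : ∀ F : Fanout rk pt 0, M F.1

/-- The derivative category `∂_M 𝓛`: a morphism `(K₁, α₁) ⟶ (K₂, α₂)` is a morphism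
`f : K₁ ⟶ K₂` of `𝓛` such that `α₁ (L, f ≫ g) = α₂ (L, g)` for every `(L, g)` in the
fanout of `K₂` at `0`. -/
instance derivCategory (rk : C → ℕ) (M : RankObj rk 0 → Type w) :
    Category (DerivObj rk M) where
  Hom A B := {f : A.pt ⟶ B.pt // ∀ F : Fanout rk B.pt 0, A.sec ⟨F.1, f ≫ F.2⟩ = B.sec F}
  id A := ⟨𝟙 A.pt, fun F => by rw [Category.id_comp]⟩
  comp {A B Z} f g := ⟨f.1 ≫ g.1, fun F => by
    rw [Category.assoc]
    exact (f.2 ⟨F.1, g.1 ≫ F.2⟩).trans (g.2 F)⟩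
  id_comp f := Subtype.ext (Category.id_comp f.1)
  comp_id f := Subtype.ext (Category.comp_id f.1)
  assoc f g h := Subtype.ext (Category.assoc f.1 g.1 h.1)

/-- The rank function of the derivative category: `rk (K, α) := rk K - 1`. -/
abbrev derivRk (rk : C → ℕ) (M : RankObj rk 0 → Type w) : DerivObj rk M → ℕ :=
  fun A => rk A.pt - 1

end

section

variable {C : Type u} [Category.{v} C]

/-- The matching object `M_K X` of a diagram `X : 𝓛 ⥤ Type` at `K`: compatible
families `d` assigning to each `(L, f)` with `rk L < rk K` an element of `X L`. -/
structure MatchingObj (rk : C → ℕ) (X : C ⥤ Type w) (K : C) : Type max u v w where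
  d : ∀ (L : C), rk L < rk K → (K ⟶ L) → X.obj L
  compat : ∀ {L₁ L₂ : C} (h₁ : rk L₁ < rk K) (h₂ : rk L₂ < rk K) (g : L₁ ⟶ L₂),
    rk L₂ < rk L₁ → ∀ f₁ : K ⟶ L₁, X.map g (d L₁ h₁ f₁) = d L₂ h₂ (f₁ ≫ g)

/-- The matching map `X K → M_K X`, sending `x` to the family `(L, f) ↦ X(f)(x)`. -/
def matchMap (rk : C → ℕ) (X : C ⥤ Type w) (K : C) (x : X.obj K) : MatchingObj rk X K where
  d L _ f := X.map f x
  compat h₁ h₂ g hg f₁ := (FunctorToTypes.map_comp_apply X f₁ g x).symm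

/-- The restriction `X₀` of a diagram `X : 𝓛 ⥤ Type` to the rank-`0` objects. -/
def diagRestrict (rk : C → ℕ) (X : C ⥤ Type w) : RankObj rk 0 → Type w :=
  fun L => X.obj L.1

/-- The induced diagram `∂X : ∂_{X₀}𝓛 ⥤ Type` on the derivative:
`∂X (K, α) := { x : X K | X(f)(x) = α (L, f) for all (L, f) in the fanout of K at 0 }`. -/
def derivDiag (rk : C → ℕ) (X : C ⥤ Type w) :
    DerivObj rk (diagRestrict rk X) ⥤ Type w where
  obj A := {x : X.obj A.pt // ∀ F : Fanout rk A.pt 0, X.map F.2 x = A.sec F}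
  map {A B} f := TypeCat.ofHom fun x => ⟨X.map f.1 x.1, fun F => by
    rw [← FunctorToTypes.map_comp_apply]
    exact (x.2 ⟨F.1, f.1 ≫ F.2⟩).trans (f.2 F)⟩
  map_id A := by
    refine ConcreteCategory.hom_ext _ _ fun x => ?_
    exact Subtype.ext (FunctorToTypes.map_id_apply X x.1)
  map_comp {A B Z} f g := by
    refine ConcreteCategory.hom_ext _ _ fun x => ?_
    exact Subtype.ext (FunctorToTypes.map_comp_apply X f.1 g.1 x.1)

end

section

variable {C : Type u} [Category.{v} C] {D : Type u₂} [Category.{v₂} D]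
  {E : Type u₃} [Category.{v₃} E]

/-- A functor between inverse categories is rank-preserving if `rk (F K) = rk K`. -/
def RankPres (F : C ⥤ D) (rkC : C → ℕ) (rkD : D → ℕ) : Prop :=
  ∀ K : C, rkD (F.obj K) = rkC K

/-- The induced map on fanouts of a rank-preserving functor, sending `(L, f)` to
`(F L, F f)`. -/
def fanoutMap (F : C ⥤ D) {rkC : C → ℕ} {rkD : D → ℕ} (hF : RankPres F rkC rkD)
    (K : C) (m : ℕ) : Fanout rkC K m → Fanout rkD (F.obj K) m :=
  fun G => ⟨⟨F.obj G.1.1, (hF G.1.1).trans G.1.2⟩, F.map G.2⟩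

/-- A rank-preserving functor is a discrete opfibration if all its induced maps on
fanouts (at `m < rk K`) are bijections. -/
structure IsDiscOpfib (F : C ⥤ D) (rkC : C → ℕ) (rkD : D → ℕ) : Prop where
  pres : RankPres F rkC rkD
  bij : ∀ (K : C) (m : ℕ), m < rkC K → Function.Bijective (fanoutMap F pres K m)

/-- The fanout bijection of a discrete opfibration, as an equivalence. -/
noncomputable def fanoutEquiv (F : C ⥤ D) {rkC : C → ℕ} {rkD : D → ℕ}
    (hF : IsDiscOpfib F rkC rkD) (K : C) (m : ℕ) (hm : m < rkC K) :
    Fanout rkC K m ≃ Fanout rkD (F.obj K) m :=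
  Equiv.ofBijective _ (hF.bij K m hm)

theorem isDiscOpfib_id (rk : C → ℕ) : IsDiscOpfib (𝟭 C) rk rk := by
  refine ⟨fun _ => rfl, fun K m hm => ?_⟩
  exact Function.bijective_id

theorem isDiscOpfib_comp {F : C ⥤ D} {G : D ⥤ E} {rkC : C → ℕ} {rkD : D → ℕ}
    {rkE : E → ℕ} (hF : IsDiscOpfib F rkC rkD) (hG : IsDiscOpfib G rkD rkE) :
    IsDiscOpfib (F ⋙ G) rkC rkE := by
  refine ⟨fun K => (hG.pres (F.obj K)).trans (hF.pres K), fun K m hm => ?_⟩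
  exact (hG.bij (F.obj K) m (by rw [hF.pres]; exact hm)).comp (hF.bij K m hm)

end

theorem discOpfib_elim {C : Type u} [Category.{v} C] {D : Type u₂}
    [Category.{v₂} D] {rkC : C → ℕ} {rkD : D → ℕ} {F : C ⥤ D}
    (hF : IsDiscOpfib F rkC rkD) (K : C) (P : ∀ L' : D, (F.obj K ⟶ L') → Prop)
    (hP : ∀ (L : C) (f : K ⟶ L), rkC L < rkC K → P (F.obj L) (F.map f))
    (L' : D) (f' : F.obj K ⟶ L') (h : rkD L' < rkD (F.obj K)) : P L' f' := by
  have h' : rkD L' < rkC K := by rw [← hF.pres K]; exact h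
  obtain ⟨⟨⟨L, hL⟩, f⟩, hG⟩ := (hF.bij K _ h').2 ⟨⟨L', rfl⟩, f'⟩
  have key := hP L f (by rw [hL]; exact h')
  have h2 : ∀ G : Fanout rkD (F.obj K) (rkD L'),
      fanoutMap F hF.pres K _ ⟨⟨L, hL⟩, f⟩ = G → P G.1.1 G.2 := by
    rintro G rfl
    exact key
  exact h2 _ hG

theorem discOpfib_unique {C : Type u} [Category.{v} C] {D : Type u₂}
    [Category.{v₂} D] {rkC : C → ℕ} {rkD : D → ℕ} {F : C ⥤ D}
    (hF : IsDiscOpfib F rkC rkD) (K L L₀ : C) (f : K ⟶ L) (f₀ : K ⟶ L₀)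
    (h : rkC L < rkC K) (e : F.obj L = F.obj L₀) (he : F.map f ≫ eqToHom e = F.map f₀) :
    ∃ e' : L = L₀, f ≫ eqToHom e' = f₀ := by
  have hr : rkC L₀ = rkC L := by rw [← hF.pres, ← hF.pres, e]
  have hinj := @(hF.bij K _ h).1 ⟨⟨L, rfl⟩, f⟩ ⟨⟨L₀, hr⟩, f₀⟩ (by
    have aux : ∀ (A B : D) (hA : rkD A = rkC L) (hB : rkD B = rkC L) (a : F.obj K ⟶ A)
        (b : F.obj K ⟶ B) (e : A = B), a ≫ eqToHom e = b →
        (⟨⟨A, hA⟩, a⟩ : Fanout rkD (F.obj K) (rkC L)) = ⟨⟨B, hB⟩, b⟩ := by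
      rintro A B hA hB a b rfl rfl
      simp
    exact aux _ _ _ _ _ _ e he)
  have aux2 : ∀ G : Fanout rkC K (rkC L), (⟨⟨L, rfl⟩, f⟩ : Fanout rkC K (rkC L)) = G →
      ∃ e' : L = G.1.1, f ≫ eqToHom e' = G.2 := by
    rintro G rfl
    exact ⟨rfl, by simp⟩
  exact aux2 _ hinj

/-- Restriction of matching families along a rank-preserving functor. -/
def matchRestrict {C : Type u} [Category.{v} C] {D : Type u₂}
    [Category.{v₂} D] {rkC : C → ℕ} {rkD : D → ℕ} {F : C ⥤ D}
    (hF : RankPres F rkC rkD) (X : D ⥤ Type w) (K : C)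
    (m : MatchingObj rkD X (F.obj K)) : MatchingObj rkC (F ⋙ X) K where
  d L h f := m.d (F.obj L) (by rw [hF, hF]; exact h) (F.map f)
  compat {L₁ L₂} h₁ h₂ g hg f₁ := by
    rw [F.map_comp]
    exact m.compat _ _ (F.map g) (by rw [hF, hF]; exact hg) (F.map f₁)

theorem matchObj_ext {C : Type u} [Category.{v} C] {rk : C → ℕ} {X : C ⥤ Type w} {K : C}
    {a b : MatchingObj rk X K} (h : ∀ L hL f, a.d L hL f = b.d L hL f) : a = b := by
  cases a
  cases b
  congr
  funext L hL f
  exact h L hL f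

theorem matchRestrict_bijective {C : Type u} [Category.{v} C] {D : Type u₂}
    [Category.{v₂} D] {rkC : C → ℕ} {rkD : D → ℕ} {F : C ⥤ D}
    (hF : IsDiscOpfib F rkC rkD) (X : D ⥤ Type w) (K : C) :
    Function.Bijective (matchRestrict hF.pres X K) := by
  constructor
  · intro a b hab
    refine matchObj_ext fun L' hL' f' => ?_
    refine discOpfib_elim hF K (fun L' f' => ∀ hL', a.d L' hL' f' = b.d L' hL' f') ?_
      L' f' hL' hL'
    intro L f h h'
    exact congrArg (fun m : MatchingObj rkC (F ⋙ X) K => m.d L h f) hab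
  · intro m
    have ex : ∀ (L' : D) (_ : rkD L' < rkD (F.obj K)) (f' : F.obj K ⟶ L'),
        ∃ y : X.obj L', ∀ (L : C) (f : K ⟶ L) (h : rkC L < rkC K) (e : F.obj L = L'),
          F.map f ≫ eqToHom e = f' → X.map (eqToHom e) (m.d L h f) = y := by
      intro L' hL' f'
      refine discOpfib_elim hF K (fun L' f' => ∃ y : X.obj L', ∀ (L : C) (f : K ⟶ L)
        (h : rkC L < rkC K) (e : F.obj L = L'),
          F.map f ≫ eqToHom e = f' → X.map (eqToHom e) (m.d L h f) = y) ?_ L' f' hL'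
      intro L₀ f₀ h₀
      refine ⟨m.d L₀ h₀ f₀, fun L f h e he => ?_⟩
      obtain ⟨rfl, rfl⟩ := discOpfib_unique hF K L L₀ f f₀ h e he
      simp
    choose d hd using ex
    have hd' : ∀ (L : C) (f : K ⟶ L) (h : rkC L < rkC K) h',
        d (F.obj L) h' (F.map f) = m.d L h f := by
      intro L f h h'
      rw [← hd (F.obj L) h' (F.map f) L f h rfl (by simp)]
      simp
    refine ⟨⟨d, ?_⟩, matchObj_ext fun L h f => hd' L f h _⟩
    intro L₁ L₂ h₁ h₂ g hg f₁
    refine discOpfib_elim hF K (fun L₁ f₁ => ∀ (h₁ : rkD L₁ < rkD (F.obj K)) (g : L₁ ⟶ L₂),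
      rkD L₂ < rkD L₁ → X.map g (d L₁ h₁ f₁) = d L₂ h₂ (f₁ ≫ g)) ?_ L₁ f₁ h₁ h₁ g hg
    intro L f h h₁ g hg
    refine discOpfib_elim hF L (fun L₂ g => ∀ h₂ : rkD L₂ < rkD (F.obj K),
      X.map g (d _ h₁ (F.map f)) = d L₂ h₂ (F.map f ≫ g)) ?_ L₂ g hg h₂
    intro M g hM h₂
    rw [← F.map_comp, hd' _ _ h, hd' _ _ (hM.trans h)]
    exact m.compat h (hM.trans h) g hM f

/-- Let `F : 𝓛 ⥤ 𝓜` be a discrete opfibration between inverse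
categories and `X : 𝓜 ⥤ Type` a functor.  For every object `K` of `𝓛` there is a
bijection between the matching objects `M_K (F ⋙ X)` and `M_{F K} X`, commuting with
the matching maps out of `(F ⋙ X) K = X (F K)`. -/
theorem matchingObj_equiv_of_discOpfib {C : Type u} [Category.{v} C] {D : Type u₂}
    [Category.{v₂} D] (r : InverseRank C) (s : InverseRank D) (F : C ⥤ D)
    (hF : IsDiscOpfib F r.rk s.rk) (X : D ⥤ Type w) (K : C) :
    ∃ e : MatchingObj r.rk (F ⋙ X) K ≃ MatchingObj s.rk X (F.obj K),
      ∀ x : X.obj (F.obj K),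
        e (matchMap r.rk (F ⋙ X) K x) = matchMap s.rk X (F.obj K) x := by
  refine ⟨(Equiv.ofBijective _ (matchRestrict_bijective hF X K)).symm, fun x => ?_⟩
  rw [Equiv.symm_apply_eq]
  rfl
end

section
/- Let H : 𝓛 ⥤ 𝓜 be a discrete opfibration between inverse categories of height p > 0, let L₀ and M₀ be families of types indexed by 𝓛(0) and 𝓜(0) respectively, and let h assign to each K in 𝓛(0) a function h_K : L₀ K → M₀(H K). Then the derived functor ∂_{H,h} : ∂_{L₀}𝓛 ⥤ ∂_{M₀}𝓜 is well defined and is a discrete opfibration. -/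
open CategoryTheory

universe w v u v₂ u₂ v₃ u₃

theorem secHEq {α : Sort*} {P : α → Sort*} (s : ∀ a, P a) {a b : α} (h : a = b) :
    HEq (s a) (s b) := by rw [h]

section

variable {C : Type u} [Category.{v} C] {D : Type u₂} [Category.{v₂} D]

/-- The section part of the object map of the derived functor `∂_{H,h}`:
`β F := h (α (H⁻¹ F))`, where `H⁻¹` is the inverse of the fanout bijection of `H`
at rank `0`. -/
noncomputable def derivedSec (H : C ⥤ D) {rkC : C → ℕ} {rkD : D → ℕ}
    (hH : IsDiscOpfib H rkC rkD)
    (L₀ : RankObj rkC 0 → Type w) (M₀ : RankObj rkD 0 → Type w)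
    (h : ∀ K : RankObj rkC 0, L₀ K → M₀ ⟨H.obj K.1, (hH.pres K.1).trans K.2⟩)
    (A : DerivObj rkC L₀) : ∀ F : Fanout rkD (H.obj A.pt) 0, M₀ F.1 :=
  Equiv.piCongrLeft (fun F : Fanout rkD (H.obj A.pt) 0 => M₀ F.1)
    (fanoutEquiv H hH A.pt 0 A.pos) (fun G => h G.1 (A.sec G))

theorem derivedSec_apply (H : C ⥤ D) {rkC : C → ℕ} {rkD : D → ℕ}
    (hH : IsDiscOpfib H rkC rkD)
    (L₀ : RankObj rkC 0 → Type w) (M₀ : RankObj rkD 0 → Type w)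
    (h : ∀ K : RankObj rkC 0, L₀ K → M₀ ⟨H.obj K.1, (hH.pres K.1).trans K.2⟩)
    (A : DerivObj rkC L₀) (G : Fanout rkC A.pt 0) :
    derivedSec H hH L₀ M₀ h A (fanoutEquiv H hH A.pt 0 A.pos G) = h G.1 (A.sec G) :=
  Equiv.piCongrLeft_apply_apply _ _ _ _

/-- The derived functor `∂_{H,h} : ∂_{L₀}𝓛 ⥤ ∂_{M₀}𝓜` of a discrete opfibration
`H : 𝓛 ⥤ 𝓜` together with a family of functions `h_K : L₀ K → M₀ (H K)`: it sends
`(K, α)` to `(H K, β)` where `β F := h (α (H⁻¹ F))`, using the inverse of the fanout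
bijection of `H` at rank `0`, and sends `(f, φ)` to `(H f, ψ)`. -/
noncomputable def derivedFunctor (H : C ⥤ D) {rkC : C → ℕ} {rkD : D → ℕ}
    (hH : IsDiscOpfib H rkC rkD)
    (L₀ : RankObj rkC 0 → Type w) (M₀ : RankObj rkD 0 → Type w)
    (h : ∀ K : RankObj rkC 0, L₀ K → M₀ ⟨H.obj K.1, (hH.pres K.1).trans K.2⟩) :
    DerivObj rkC L₀ ⥤ DerivObj rkD M₀ where
  obj A :=
    { pt := H.obj A.pt
      pos := by rw [hH.pres]; exact A.pos
      sec := derivedSec H hH L₀ M₀ h A }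
  map {A B} f := ⟨H.map f.1, by
    intro F
    obtain ⟨G, rfl⟩ := (fanoutEquiv H hH B.pt 0 B.pos).surjective F
    have key : (⟨(fanoutEquiv H hH B.pt 0 B.pos G).1,
          H.map f.1 ≫ (fanoutEquiv H hH B.pt 0 B.pos G).2⟩ : Fanout rkD (H.obj A.pt) 0)
        = fanoutEquiv H hH A.pt 0 A.pos ⟨G.1, f.1 ≫ G.2⟩ := by
      show (⟨⟨H.obj G.1.1, (hH.pres G.1.1).trans G.1.2⟩, H.map f.1 ≫ H.map G.2⟩ :
          Fanout rkD (H.obj A.pt) 0) = ⟨⟨H.obj G.1.1, (hH.pres G.1.1).trans G.1.2⟩,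
          H.map (f.1 ≫ G.2)⟩
      rw [H.map_comp]
    have h1 := secHEq (derivedSec H hH L₀ M₀ h A) key
    have h2 := derivedSec_apply H hH L₀ M₀ h A ⟨G.1, f.1 ≫ G.2⟩
    have h3 := derivedSec_apply H hH L₀ M₀ h B G
    have h4 : h G.1 (A.sec ⟨G.1, f.1 ≫ G.2⟩) = h G.1 (B.sec G) := congrArg (h G.1) (f.2 G)
    exact eq_of_heq (h1.trans (heq_of_eq (h2.trans (h4.trans h3.symm))))⟩
  map_id A := Subtype.ext (H.map_id A.pt)
  map_comp f g := Subtype.ext (H.map_comp f.1 g.1)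

end

/-- Forgetting sections: the fanout of `(K, α)` at `m` maps to that of `K` at `m + 1`. -/
def fanoutForget {C : Type u} [Category.{v} C] (rk : C → ℕ) (M : RankObj rk 0 → Type w)
    (A : DerivObj rk M) (m : ℕ) (G : Fanout (derivRk rk M) A m) : Fanout rk A.pt (m + 1) :=
  ⟨⟨G.1.1.pt, by
    have h1 : rk G.1.1.pt - 1 = m := G.1.2
    have h2 := G.1.1.pos
    omega⟩, G.2.1⟩

theorem fanoutForget_bijective {C : Type u} [Category.{v} C] (rk : C → ℕ)
    (M : RankObj rk 0 → Type w) (A : DerivObj rk M) (m : ℕ) :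
    Function.Bijective (fanoutForget rk M A m) := by
  constructor
  · rintro ⟨⟨⟨B, hB, β⟩, hm⟩, ⟨f, hf⟩⟩ ⟨⟨⟨B', hB', β'⟩, hm'⟩, ⟨f', hf'⟩⟩ e
    dsimp only at f f' hf hf'
    unfold fanoutForget at e
    dsimp only at e
    obtain ⟨e1, e2⟩ := Sigma.mk.inj e
    have e3 : B = B' := congrArg Subtype.val e1
    subst e3
    have e4 : f = f' := eq_of_heq e2
    subst e4
    have e5 : β = β' := funext fun F => (hf F).symm.trans (hf' F)
    subst e5
    rfl
  · rintro ⟨⟨L, hL⟩, f⟩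
    dsimp only at f
    refine ⟨⟨⟨⟨L, by omega, fun F => A.sec ⟨F.1, f ≫ F.2⟩⟩, ?_⟩, ⟨f, fun F => rfl⟩⟩, rfl⟩
    show rk L - 1 = m
    omega

/-- Let `H : 𝓛 ⥤ 𝓜` be a discrete opfibration between inverse
categories of height `p > 0`, `L₀` and `M₀` families of types indexed by the rank-0
objects, and `h` a family of functions `h_K : L₀ K → M₀ (H K)`.  Then the derived
functor `∂_{H,h} : ∂_{L₀}𝓛 ⥤ ∂_{M₀}𝓜` (which is well defined: see `derivedFunctor`)
is a discrete opfibration (for the rank functions `rk (K, α) = rk K - 1`). -/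
theorem derivedFunctor_isDiscOpfib {C : Type u} [Category.{v} C] {D : Type u₂}
    [Category.{v₂} D] (r : InverseRank C) (s : InverseRank D) (p : ℕ) (hp : 0 < p)
    (hhr : r.HasHeight p) (hhs : s.HasHeight p) (H : C ⥤ D)
    (hH : IsDiscOpfib H r.rk s.rk)
    (L₀ : RankObj r.rk 0 → Type w) (M₀ : RankObj s.rk 0 → Type w)
    (h : ∀ K : RankObj r.rk 0, L₀ K → M₀ ⟨H.obj K.1, (hH.pres K.1).trans K.2⟩) :
    IsDiscOpfib (derivedFunctor H hH L₀ M₀ h) (derivRk r.rk L₀) (derivRk s.rk M₀) := by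
  have hp' : RankPres (derivedFunctor H hH L₀ M₀ h) (derivRk r.rk L₀) (derivRk s.rk M₀) :=
    fun A => congrArg (· - 1) (hH.pres A.pt)
  refine ⟨hp', fun A m hm => ?_⟩
  have hm' : m + 1 < r.rk A.pt := by
    have h1 : m < r.rk A.pt - 1 := hm
    omega
  have hc : fanoutForget s.rk M₀ ((derivedFunctor H hH L₀ M₀ h).obj A) m ∘
      fanoutMap (derivedFunctor H hH L₀ M₀ h) hp' A m =
      fanoutMap H hH.pres A.pt (m + 1) ∘ fanoutForget r.rk L₀ A m := rfl
  have hb := (hH.bij A.pt (m + 1) hm').comp (fanoutForget_bijective r.rk L₀ A m)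
  rw [← hc] at hb
  exact (Function.Bijective.of_comp_iff'
    (fanoutForget_bijective s.rk M₀ ((derivedFunctor H hH L₀ M₀ h).obj A) m) _).1 hb
end

section
/- Derivation of inverse categories is functorial: (1) for an inverse category 𝓛 of height p > 0 and a family L₀ of types indexed by 𝓛(0), the derived functor ∂_{1_𝓛, (λ K x, x)} equals the identity functor of ∂_{L₀}𝓛; and (2) for discrete opfibrations H : 𝓛 ⥤ 𝓜 and I : 𝓜 ⥤ 𝓝 between inverse categories of height p > 0, families L₀, M₀, N₀ indexed by the rank-0 objects, and function families h_K : L₀ K → M₀(H K) and i_J : M₀ J → N₀(I J), one has ∂_{I,i} ∘ ∂_{H,h} = ∂_{I ∘ H, i ∘ h} as functors ∂_{L₀}𝓛 ⥤ ∂_{N₀}𝓝, where (i ∘ h)_K := i_{H K} ∘ h_K. -/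
open CategoryTheory

universe w v u v₂ u₂ v₃ u₃

theorem derivObj_eqToHom_val {C : Type u} [Category.{v} C] {rk : C → ℕ}
    {M : RankObj rk 0 → Type w} {A B : DerivObj rk M} (e : A = B) :
    (eqToHom e).1 = eqToHom (congrArg DerivObj.pt e) := by
  subst e; rfl

theorem derivObj_functor_ext {C : Type u} [Category.{v} C] {D : Type u₂} [Category.{v₂} D]
    {rk : D → ℕ} {M : RankObj rk 0 → Type w} {F G : C ⥤ DerivObj rk M}
    (ho : ∀ A, F.obj A = G.obj A)
    (hm : ∀ (A B : C) (f : A ⟶ B), (F.map f).1 = eqToHom (congrArg DerivObj.pt (ho A)) ≫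
      (G.map f).1 ≫ eqToHom (congrArg DerivObj.pt (ho B)).symm) : F = G := by
  refine CategoryTheory.Functor.ext ho fun A B f => Subtype.ext ?_
  refine (hm A B f).trans ?_
  change _ = (eqToHom (ho A)).1 ≫ (G.map f).1 ≫ (eqToHom (ho B).symm).1
  rw [derivObj_eqToHom_val, derivObj_eqToHom_val]

/-- Derivation of inverse categories is functorial:
(1) the derived functor of the identity (with the identity family of functions) is
the identity functor of `∂_{L₀}𝓛`; and
(2) for discrete opfibrations `H : 𝓛 ⥤ 𝓜` and `I : 𝓜 ⥤ 𝓝` and families of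
functions `h`, `i`, one has `∂_{I,i} ∘ ∂_{H,h} = ∂_{I ∘ H, i ∘ h}` as functors
`∂_{L₀}𝓛 ⥤ ∂_{N₀}𝓝`, where `(i ∘ h)_K := i_{H K} ∘ h_K`. -/
theorem derivedFunctor_id_and_comp {C : Type u} [Category.{v} C] {D : Type u₂}
    [Category.{v₂} D] {E : Type u₃} [Category.{v₃} E]
    (r : InverseRank C) (s : InverseRank D) (t : InverseRank E)
    (p : ℕ) (hp : 0 < p) (hhr : r.HasHeight p) (hhs : s.HasHeight p)
    (hht : t.HasHeight p)
    (H : C ⥤ D) (I : D ⥤ E) (hH : IsDiscOpfib H r.rk s.rk)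
    (hI : IsDiscOpfib I s.rk t.rk)
    (L₀ : RankObj r.rk 0 → Type w) (M₀ : RankObj s.rk 0 → Type w)
    (N₀ : RankObj t.rk 0 → Type w)
    (h : ∀ K : RankObj r.rk 0, L₀ K → M₀ ⟨H.obj K.1, (hH.pres K.1).trans K.2⟩)
    (i : ∀ J : RankObj s.rk 0, M₀ J → N₀ ⟨I.obj J.1, (hI.pres J.1).trans J.2⟩) :
    (derivedFunctor (𝟭 C) (isDiscOpfib_id r.rk) L₀ L₀ (fun _ x => x)
        = 𝟭 (DerivObj r.rk L₀)) ∧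
      (derivedFunctor H hH L₀ M₀ h ⋙ derivedFunctor I hI M₀ N₀ i
        = derivedFunctor (H ⋙ I) (isDiscOpfib_comp hH hI) L₀ N₀
            (fun K x => i ⟨H.obj K.1, (hH.pres K.1).trans K.2⟩ (h K x))) := by
  constructor
  · have ho : ∀ A, (derivedFunctor (𝟭 C) (isDiscOpfib_id r.rk) L₀ L₀ (fun _ x => x)).obj A
        = (𝟭 (DerivObj r.rk L₀)).obj A := by
      intro A
      have hs : derivedSec (𝟭 C) (isDiscOpfib_id r.rk) L₀ L₀ (fun _ x => x) A = A.sec := by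
        funext F
        exact derivedSec_apply (𝟭 C) (isDiscOpfib_id r.rk) L₀ L₀ (fun _ x => x) A F
      exact congrArg (fun σ => DerivObj.mk A.pt A.pos σ) hs
    refine derivObj_functor_ext ho fun A B f => ?_
    change f.1 = 𝟙 _ ≫ f.1 ≫ 𝟙 _
    rw [Category.id_comp, Category.comp_id]
  · have ho : ∀ A, (derivedFunctor H hH L₀ M₀ h ⋙ derivedFunctor I hI M₀ N₀ i).obj A
        = (derivedFunctor (H ⋙ I) (isDiscOpfib_comp hH hI) L₀ N₀
            (fun K x => i ⟨H.obj K.1, (hH.pres K.1).trans K.2⟩ (h K x))).obj A := by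
      intro A
      have hs : derivedSec I hI M₀ N₀ i ((derivedFunctor H hH L₀ M₀ h).obj A)
          = derivedSec (H ⋙ I) (isDiscOpfib_comp hH hI) L₀ N₀
            (fun K x => i ⟨H.obj K.1, (hH.pres K.1).trans K.2⟩ (h K x)) A := by
        funext F
        obtain ⟨G, rfl⟩ :=
          (fanoutEquiv (H ⋙ I) (isDiscOpfib_comp hH hI) A.pt 0 A.pos).surjective F
        refine Eq.trans ?_ (derivedSec_apply (H ⋙ I) (isDiscOpfib_comp hH hI) L₀ N₀
            (fun K x => i ⟨H.obj K.1, (hH.pres K.1).trans K.2⟩ (h K x)) A G).symm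
        refine (derivedSec_apply I hI M₀ N₀ i ((derivedFunctor H hH L₀ M₀ h).obj A)
          (fanoutEquiv H hH A.pt 0 A.pos G)).trans ?_
        exact congrArg (i ⟨H.obj G.1.1, (hH.pres G.1.1).trans G.1.2⟩)
          (derivedSec_apply H hH L₀ M₀ h A G)
      exact congrArg (fun σ => DerivObj.mk (rk := t.rk) (M := N₀) (I.obj (H.obj A.pt))
        ((derivedFunctor I hI M₀ N₀ i).obj ((derivedFunctor H hH L₀ M₀ h).obj A)).pos σ) hs
    refine derivObj_functor_ext ho fun A B f => ?_
    change I.map (H.map f.1) = 𝟙 _ ≫ I.map (H.map f.1) ≫ 𝟙 _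
    rw [Category.id_comp, Category.comp_id]
end
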